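/- Let A = ℂ² and for each p in P = ((ℕ∖{0})×ℤ) ∪ ({0}×ℕ) (the lexicographic positive cone of ℤ×ℤ) let E_p = ℂ² with left action φ_p(λ₁,λ₂) = (λ₁,λ₂) coordinatewise if p ∈ {0}×ℕ, and φ_p(λ₁,λ₂) = (λ₁,λ₁) otherwise; right action coordinatewise, multiplication μ_{p,q}((z₁,z₂)⊗(w₁,w₂)) = (z₁w₁, z₂w₂) if q ∈ {0}×ℕ and (z₁w₁, z₁w₂) otherwise. Then the multiplication maps are associative: μ_{pq,r}(μ_{p,q}(x⊗y)⊗z) = μ_{p,qr}(x⊗μ_{q,r}(y⊗z)) for all p,q,r ∈ P and x,y,z ∈ ℂ², and each μ_{p,q} intertwines the left actions: μ_{p,q}((φ_p(a)x)⊗y) = φ_{pq}(a)μ_{p,q}(x⊗y). -/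

import Mathlib

open scoped Classical

/-- The positive cone of `ℤ × ℤ` for the lexicographic order. -/
def lexConeP : Set (ℤ × ℤ) :=
  {x : ℤ × ℤ | (0 < x.1) ∨ (x.1 = 0 ∧ 0 ≤ x.2)}

/-- `S = {0} × ℕ` inside `ℤ × ℤ`. -/
def lexConeS : Set (ℤ × ℤ) :=
  {x : ℤ × ℤ | x.1 = 0 ∧ 0 ≤ x.2}

/-- The left action `φ_p` of `A = ℂ²` on `E_p = ℂ²`. -/
noncomputable def phiSY (p : ℤ × ℤ) (a : ℂ × ℂ) (x : ℂ × ℂ) : ℂ × ℂ :=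
  if p ∈ lexConeS then (a.1 * x.1, a.2 * x.2) else (a.1 * x.1, a.1 * x.2)

/-- The multiplication maps `μ_{p,q} : E_p ⊗ E_q → E_{pq}` (as bilinear maps `ℂ²×ℂ²→ℂ²`). -/
noncomputable def muSY (p q : ℤ × ℤ) (x y : ℂ × ℂ) : ℂ × ℂ :=
  if q ∈ lexConeS then (x.1 * y.1, x.2 * y.2) else (x.1 * y.1, x.1 * y.2)

/-!
Let `e (z₁, z₂) = (z₁, z₁)`, an idempotent endomorphism of `ℂ²`, and put `α_p = id` for `p ∈ S` and
`α_p = e` otherwise. Then `φ_p(a) x = α_p(a) x` and `μ_{p,q}(x ⊗ y) = α_q(x) y`. Since `S` is a face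
of `P`, that is, `p + q ∈ S` iff `p, q ∈ S`, the family satisfies `α_{p+q} = α_q ∘ α_p` on `P`, so
both sides of associativity equal `α_{q+r}(x) α_r(y) z`. As `φ_p(a) x` is also a product
`μ_{q,p}(a ⊗ x)`, the intertwining identity is an instance of associativity.
-/

section ProductSystem

variable {G A F : Type*} [Semigroup A] [FunLike F A A]

/-- The multiplication `E_p × E_q → E_{p+q}` of the product system of a family `α` of endomorphisms
of `A`, all of whose fibres are copies of `A`. The degree `p` is an argument only to match the
notation `μ_{p,q}`. -/
def fiberMul (α : G → F) (_p q : G) (x y : A) : A :=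
  α q x * y

/-- The left action of `A` on the fibre `E_p` of the product system of a family `α` of endomorphisms
of `A`. -/
def fiberLeftAct (α : G → F) (p : G) (a x : A) : A :=
  α p a * x

variable [Add G] [MulHomClass F A A] {α : G → F}

theorem fiberMul_assoc {q r : G} (h : ∀ a, α (q + r) a = α r (α q a)) (p : G) (x y z : A) :
    fiberMul α (p + q) r (fiberMul α p q x y) z =
      fiberMul α p (q + r) x (fiberMul α q r y z) :=
  calc
    α r (α q x * y) * z = α r (α q x) * (α r y * z) := by rw [map_mul, mul_assoc]
    _ = α (q + r) x * (α r y * z) := by rw [h]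

theorem fiberMul_fiberLeftAct {p q : G} (h : ∀ a, α (p + q) a = α q (α p a)) (a x y : A) :
    fiberMul α p q (fiberLeftAct α p a x) y =
      fiberLeftAct α (p + q) a (fiberMul α p q x y) :=
  fiberMul_assoc h p a x y

theorem simsYeend_product_system_general {P : Set G}
    (hα : ∀ p ∈ P, ∀ q ∈ P, ∀ a, α (p + q) a = α q (α p a)) :
    (∀ p, ∀ q ∈ P, ∀ r ∈ P, ∀ x y z : A,
        fiberMul α (p + q) r (fiberMul α p q x y) z =
          fiberMul α p (q + r) x (fiberMul α q r y z)) ∧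
      ∀ p ∈ P, ∀ q ∈ P, ∀ a x y : A,
        fiberMul α p q (fiberLeftAct α p a x) y =
          fiberLeftAct α (p + q) a (fiberMul α p q x y) :=
  ⟨fun p q hq r hr => fiberMul_assoc (hα q hq r hr) p,
    fun p hp q hq => fiberMul_fiberLeftAct (hα p hp q hq)⟩

end ProductSystem

section Face

variable {G M : Type*} [Monoid M]

/-- The family equal to `1` on `S` and to `e` off `S`. It is multiplicative when `e` is idempotent
and `S` is a face. -/
noncomputable def faceFamily (S : Set G) (e : M) (p : G) : M :=
  if p ∈ S then 1 else e

theorem faceFamily_add [Add G] {S : Set G} {e : M} (he : IsIdempotentElem e) {p q : G}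
    (hS : p + q ∈ S ↔ p ∈ S ∧ q ∈ S) :
    faceFamily S e (p + q) = faceFamily S e q * faceFamily S e p := by
  by_cases hp : p ∈ S <;> by_cases hq : q ∈ S <;> simp [faceFamily, hS, hp, hq, he.eq]

end Face

/-- The endomorphism `(z₁, z₂) ↦ (z₁, z₁)` of `R × R`, which twists the fibres outside `S`. -/
def fstDiag (R : Type*) [NonAssocSemiring R] : R × R →+* R × R :=
  (RingHom.fst R R).prod (RingHom.fst R R)

theorem isIdempotentElem_fstDiag (R : Type*) [NonAssocSemiring R] :
    IsIdempotentElem (fstDiag R) :=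
  rfl

theorem add_mem_lexConeS_iff {p q : ℤ × ℤ} (hp : p ∈ lexConeP) (hq : q ∈ lexConeP) :
    p + q ∈ lexConeS ↔ p ∈ lexConeS ∧ q ∈ lexConeS := by
  simp only [lexConeP, lexConeS, Set.mem_ofPred_eq, Prod.fst_add, Prod.snd_add] at *
  omega

/-- The endomorphisms `α_p` of `ℂ²` that define the Sims–Yeend product system. They are given for
all `p : ℤ × ℤ`, but form an action only on `lexConeP`. -/
noncomputable def lexConeEnd : ℤ × ℤ → (ℂ × ℂ →+* ℂ × ℂ) :=
  faceFamily lexConeS (fstDiag ℂ)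

theorem lexConeEnd_add_apply {p q : ℤ × ℤ} (hp : p ∈ lexConeP) (hq : q ∈ lexConeP) (a : ℂ × ℂ) :
    lexConeEnd (p + q) a = lexConeEnd q (lexConeEnd p a) :=
  DFunLike.congr_fun
    (faceFamily_add (isIdempotentElem_fstDiag ℂ) (add_mem_lexConeS_iff hp hq)) a

theorem phiSY_eq_fiberLeftAct : phiSY = fiberLeftAct lexConeEnd := by
  funext p a x
  by_cases hp : p ∈ lexConeS <;>
    simp [phiSY, fiberLeftAct, lexConeEnd, faceFamily, fstDiag, hp, Prod.mul_def]

theorem muSY_eq_fiberMul : muSY = fiberMul lexConeEnd := by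
  funext p q x y
  exact congr_fun₃ phiSY_eq_fiberLeftAct q x y

/-- For the Sims–Yeend product system over the lexicographic cone
`P = ((ℕ∖{0})×ℤ) ∪ ({0}×ℕ)` with fibres `E_p = ℂ²`, the multiplication maps are
associative and intertwine the left actions. -/
theorem simsYeend_product_system :
    (∀ p ∈ lexConeP, ∀ q ∈ lexConeP, ∀ r ∈ lexConeP, ∀ x y z : ℂ × ℂ,
        muSY (p + q) r (muSY p q x y) z = muSY p (q + r) x (muSY q r y z)) ∧
      ∀ p ∈ lexConeP, ∀ q ∈ lexConeP, ∀ a x y : ℂ × ℂ,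
        muSY p q (phiSY p a x) y = phiSY (p + q) a (muSY p q x y) := by
  rw [muSY_eq_fiberMul, phiSY_eq_fiberLeftAct]
  obtain ⟨assoc, intertwine⟩ :=
    simsYeend_product_system_general fun _ hp _ hq => lexConeEnd_add_apply hp hq
  exact ⟨fun p _ => assoc p, intertwine⟩
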